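/- Let t be a diagonal N×N matrix and c an eigenvalue of t. In a Jordan normal form of e^reg + t there is exactly one Jordan block with eigenvalue c, and its size is m(t,c); equivalently, dim ker((e^reg + t − c·Id)^k) = min(k, m(t,c)) for every k ≥ 0. -/

import Mathlib

/-! In a Jordan normal form of `e^reg + t`, `t` diagonal, there is exactly one Jordan
block for each eigenvalue `c` of `t`, of size `m(t,c)`:
`dim ker((e^reg + t − c)^k) = min(k, m(t,c))`. -/

namespace PrincipalSetup

variable (𝕂 : Type*) [Field 𝕂] (N : ℕ)

/-- The regular nilpotent matrix: `e^reg · v_j = v_{j−1}`. -/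
def ereg : Matrix (Fin N) (Fin N) 𝕂 :=
  Matrix.of fun r c => if (r : ℕ) + 1 = (c : ℕ) then 1 else 0

end PrincipalSetup

open PrincipalSetup

/-!
The dimensions of the kernels of `(f - μ)^k` increase by at most the geometric multiplicity of `μ`
at each step, and once they fail to increase they have reached the algebraic multiplicity. So if
the geometric multiplicity is at most one, they increase by exactly one until the algebraic
multiplicity is reached. For `e^reg + t` the geometric multiplicity is at most one because the
ones on the superdiagonal make an eigenvector determined by its first coordinate, and the algebraic
multiplicity is read off the diagonal because the matrix is upper triangular.
-/

namespace JordanBlock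

open Module Module.End Matrix Polynomial

section GeneralizedEigenspaces

lemma finrank_comap_le {K V W : Type*} [DivisionRing K] [AddCommGroup V] [Module K V]
    [AddCommGroup W] [Module K W] (f : V →ₗ[K] W) (p : Submodule K W)
    [FiniteDimensional K p] [FiniteDimensional K f.ker] :
    finrank K (p.comap f) ≤ finrank K p + finrank K f.ker := by
  have h := f.lift_rank_comap_le p
  simp only [← finrank_eq_rank, Cardinal.lift_natCast] at h
  exact_mod_cast h

variable {K V : Type*} [Field K] [AddCommGroup V] [Module K V]

lemma genEigenspace_eq_maxGenEigenspace_of_eq_succ {f : End K V} {μ : K} {k : ℕ}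
    (h : f.genEigenspace μ k = f.genEigenspace μ (k + 1 : ℕ)) :
    f.genEigenspace μ k = f.maxGenEigenspace μ := by
  refine le_antisymm (f.genEigenspace_le_maximal μ k) fun x hx ↦ ?_
  obtain ⟨m, hm⟩ := mem_genEigenspace_top.mp hx
  rw [genEigenspace_nat, genEigenspace_nat] at h
  rw [mem_genEigenspace_nat, ker_pow_constant h m]
  exact (f - μ • 1).iterateKer.monotone (Nat.le_add_left m k) hm

variable [FiniteDimensional K V]

lemma finrank_genEigenspace_succ_le (f : End K V) (μ : K) (k : ℕ) :
    finrank K (f.genEigenspace μ (k + 1 : ℕ)) ≤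
      finrank K (f.genEigenspace μ k) + finrank K (f.eigenspace μ) := by
  have hcomap : f.genEigenspace μ (k + 1 : ℕ) = (f.genEigenspace μ k).comap (f - μ • 1) := by
    rw [genEigenspace_nat, genEigenspace_nat, pow_succ, mul_eq_comp, LinearMap.ker_comp]
  rw [hcomap, eigenspace_def]
  exact finrank_comap_le _ _

theorem finrank_genEigenspace_eq_min {f : End K V} {μ : K}
    (hμ : finrank K (f.eigenspace μ) ≤ 1) (k : ℕ) :
    finrank K (f.genEigenspace μ k) = min k (f.charpoly.rootMultiplicity μ) := by
  induction k with
  | zero => simp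
  | succ k ih =>
    have hmono : f.genEigenspace μ k ≤ f.genEigenspace μ (k + 1 : ℕ) :=
      (f.genEigenspace μ).monotone (by exact_mod_cast k.le_succ)
    rcases hmono.eq_or_lt with heq | hlt
    · have hmax := LinearMap.finrank_maxGenEigenspace_eq f μ
      rw [← genEigenspace_eq_maxGenEigenspace_of_eq_succ heq] at hmax
      rw [← heq]
      omega
    · have hgrow := Submodule.finrank_lt_finrank_of_lt hlt
      have hstep := finrank_genEigenspace_succ_le f μ k
      have hbound := LinearMap.finrank_genEigenspace_le f μ (k + 1)
      omega

end GeneralizedEigenspaces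

section Matrices

/-- A lower Hessenberg matrix (zero above the superdiagonal) all of whose superdiagonal entries are
nonzero; the eigenspaces of such a matrix are at most one-dimensional. The superdiagonal positions
are the pairs `i ⋖ j`, which makes the notion independent of an enumeration of the index type. -/
structure IsUnreducedLowerHessenberg {n R : Type*} [Preorder n] [Zero R]
    (A : Matrix n n R) : Prop where
  superdiag_ne_zero : ∀ ⦃i j⦄, i ⋖ j → A i j ≠ 0
  eq_zero_of_lt_of_lt : ∀ ⦃i j k⦄, i < j → j < k → A i k = 0

variable {n R : Type*} [Fintype n] [CommRing R]

lemma ker_mulVecLin_sub_smul_one_pow [DecidableEq n] (A : Matrix n n R) (μ : R) (k : ℕ) :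
    ((A - μ • (1 : Matrix n n R)) ^ k).mulVecLin.ker = genEigenspace A.mulVecLin μ k := by
  simp only [genEigenspace_nat, ← toLin'_apply', toLin'_pow, map_sub, map_smul, toLin'_one,
    one_eq_id]

variable [LinearOrder n]

lemma rootMultiplicity_charpoly_of_isUpperTriangular [IsDomain R] {A : Matrix n n R}
    (hA : A.IsUpperTriangular) (μ : R) :
    A.charpoly.rootMultiplicity μ = Nat.card {i // A i i = μ} := by
  classical
  have hroots : A.charpoly.roots = Finset.univ.val.map fun i ↦ A i i := by
    rw [charpoly_of_isUpperTriangular A hA, ← roots_multiset_prod_X_sub_C (Finset.univ.val.map _),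
      Multiset.map_map]
    rfl
  rw [← count_roots, hroots, Multiset.count_map, Nat.card_eq_fintype_card, Fintype.card_subtype,
    Finset.card_def, Finset.filter_val]
  simp only [eq_comm]

variable {A : Matrix n n R}

lemma IsUnreducedLowerHessenberg.eq_zero_of_mulVec_eq_smul [NoZeroDivisors R]
    (hA : IsUnreducedLowerHessenberg A) {μ : R} {x : n → R} (hx : A *ᵥ x = μ • x)
    (hmin : ∀ i, IsMin i → x i = 0) : x = 0 := by
  funext j
  induction j using WellFoundedLT.induction with | ind j ih =>
  by_cases hj : IsMin j
  · exact hmin j hj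
  obtain ⟨i, hij⟩ := exists_covBy_of_wellFoundedGT hj
  have hrow : A i j * x j = 0 := calc
    A i j * x j = (A *ᵥ x) i := by
      refine (Fintype.sum_eq_single (f := fun m ↦ A i m * x m) j fun m hm ↦ ?_).symm
      rcases hm.lt_or_gt with hlt | hgt
      · rw [ih m hlt, Pi.zero_apply, mul_zero]
      · rw [hA.eq_zero_of_lt_of_lt hij.lt hgt, zero_mul]
    _ = μ * x i := congrFun hx i
    _ = 0 := by rw [ih i hij.lt, Pi.zero_apply, mul_zero]
  exact (mul_eq_zero.mp hrow).resolve_left (hA.superdiag_ne_zero hij)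

theorem IsUnreducedLowerHessenberg.finrank_eigenspace_le_one [IsDomain R]
    (hA : IsUnreducedLowerHessenberg A) (μ : R) :
    finrank R (eigenspace A.mulVecLin μ) ≤ 1 := by
  cases isEmpty_or_nonempty n
  · simp [finrank_zero_of_subsingleton]
  obtain ⟨i₀, hi₀⟩ := Finite.exists_min (id : n → n)
  let firstCoord : eigenspace A.mulVecLin μ →ₗ[R] R :=
    LinearMap.proj i₀ ∘ₗ Submodule.subtype _
  have hinj : Function.Injective firstCoord := by
    refine (injective_iff_map_eq_zero firstCoord).mpr fun x hx ↦ Subtype.ext ?_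
    refine hA.eq_zero_of_mulVec_eq_smul (mem_eigenspace_iff.mp x.2) fun i hi ↦ ?_
    rwa [hi.eq_of_ge (hi₀ i)]
  simpa using LinearMap.finrank_le_finrank_of_injective hinj

end Matrices

section RegularNilpotent

variable {K : Type*} [Field K] {N : ℕ} (d : Fin N → K)

lemma ereg_apply (i j : Fin N) : ereg K N i j = if (i : ℕ) + 1 = j then 1 else 0 := rfl

lemma isUpperTriangular_ereg_add_diagonal : (ereg K N + diagonal d).IsUpperTriangular := by
  refine BlockTriangular.add (fun i j (hij : j < i) ↦ ?_) (blockTriangular_diagonal d)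
  rw [ereg_apply, if_neg (by omega)]

lemma ereg_add_diagonal_apply_self (i : Fin N) : (ereg K N + diagonal d) i i = d i := by
  simp [ereg_apply]

lemma isUnreducedLowerHessenberg_ereg_add_diagonal :
    IsUnreducedLowerHessenberg (ereg K N + diagonal d) where
  superdiag_ne_zero i j hij := by
    have hsucc : (i : ℕ) + 1 = j := Nat.covBy_iff_add_one_eq.mp hij.coe_fin
    rw [Matrix.add_apply, diagonal_apply_ne d hij.ne, ereg_apply, if_pos hsucc, add_zero]
    exact one_ne_zero
  eq_zero_of_lt_of_lt i j k hij hjk := by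
    rw [Matrix.add_apply, diagonal_apply_ne d (hij.trans hjk).ne, ereg_apply, if_neg (by omega),
      add_zero]

end RegularNilpotent

end JordanBlock

open JordanBlock

theorem jordan_block_of_ereg_add_diagonal_general {𝕂 : Type*} [Field 𝕂] {N : ℕ}
    (d : Fin N → 𝕂) (c : 𝕂) (k : ℕ) :
    Module.finrank 𝕂
        (LinearMap.ker
          (Matrix.mulVecLin
            ((ereg 𝕂 N + Matrix.diagonal d - c • (1 : Matrix (Fin N) (Fin N) 𝕂)) ^ k))) =
      min k (Nat.card {j : Fin N // d j = c}) := by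
  have hgeom := (isUnreducedLowerHessenberg_ereg_add_diagonal d).finrank_eigenspace_le_one c
  have halg := rootMultiplicity_charpoly_of_isUpperTriangular
    (isUpperTriangular_ereg_add_diagonal d) c
  simp only [ereg_add_diagonal_apply_self] at halg
  rw [ker_mulVecLin_sub_smul_one_pow, finrank_genEigenspace_eq_min hgeom,
    Matrix.charpoly_mulVecLin, halg]

theorem jordan_block_of_ereg_add_diagonal {𝕂 : Type*} [Field 𝕂] [IsAlgClosed 𝕂]
    [CharZero 𝕂] {N : ℕ} (d : Fin N → 𝕂) (c : 𝕂) (hc : c ∈ Set.range d) :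
    ∀ k : ℕ,
      Module.finrank 𝕂
          (LinearMap.ker
            (Matrix.mulVecLin
              ((ereg 𝕂 N + Matrix.diagonal d - c • (1 : Matrix (Fin N) (Fin N) 𝕂)) ^ k))) =
        min k (Nat.card {j : Fin N // d j = c}) :=
  jordan_block_of_ereg_add_diagonal_general d c
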